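/- Let d ≥ 1 and let u : ℝ → 𝒮(ℝ^d; ℂ) be a Schwartz solution of the linear Schrödinger equation. Let φ : ℝ^d → ℝ be a bounded continuously differentiable function with sup_{x} |∇φ(x)| ≤ L. Then for every t ≥ 0, ‖φ · u(t)‖_{L²(ℝ^d)} ≤ ‖φ · u(0)‖_{L²(ℝ^d)} + 2 t L ‖∇u(0)‖_{L²(ℝ^d)}. -/

import Mathlib

open MeasureTheory Filter
open scoped RealInnerProductSpace

noncomputable section

abbrev Ed (d : ℕ) : Type := EuclideanSpace ℝ (Fin d)

/-- The `i`-th standard basis vector of `ℝ^d`. -/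
def stdBasis {d : ℕ} (i : Fin d) : Ed d := EuclideanSpace.single i 1

/-- The `i`-th spatial partial derivative. -/
def pd {d : ℕ} (f : Ed d → ℂ) (i : Fin d) (x : Ed d) : ℂ :=
  fderiv ℝ f x (stdBasis i)

/-- The spatial Laplacian. -/
def lap {d : ℕ} (f : Ed d → ℂ) (x : Ed d) : ℂ :=
  ∑ i, pd (pd f i) i x

/-- Squared (Euclidean) pointwise norm of the spatial gradient. -/
def gradNormSq {d : ℕ} (f : Ed d → ℂ) (x : Ed d) : ℝ :=
  ∑ i, ‖pd f i x‖ ^ 2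

/-- `L²` norm of `f` restricted to a set `s`. -/
def L2On {d : ℕ} (s : Set (Ed d)) (f : Ed d → ℂ) : ℝ :=
  (∫ x in s, ‖f x‖ ^ 2) ^ (1/2 : ℝ)

/-- `L²` norm of `f` on all of `ℝ^d`. -/
def L2 {d : ℕ} (f : Ed d → ℂ) : ℝ :=
  (∫ x, ‖f x‖ ^ 2) ^ (1/2 : ℝ)

/-- `L²` norm of the spatial gradient of `f`. -/
def gradL2 {d : ℕ} (f : Ed d → ℂ) : ℝ :=
  (∫ x, gradNormSq f x) ^ (1/2 : ℝ)

/-- Distance between two sets. -/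
def setDist {d : ℕ} (A B : Set (Ed d)) : ℝ :=
  sInf (Set.image2 dist A B)

/-- A Schwartz solution of the linear Schrödinger equation:
smooth in time-space and `∂ₜ u = i Δ u`. -/
def IsLinSchrodSol (d : ℕ) (u : ℝ → SchwartzMap (Ed d) ℂ) : Prop :=
  ContDiff ℝ (⊤ : ℕ∞) (fun p : ℝ × Ed d => u p.1 p.2) ∧
  ∀ t x, deriv (fun s => u s x) t = Complex.I * lap (u t) x

/-- A Schwartz solution of the nonlinear Schrödinger equation with parameters `lam, σ`:
smooth in time-space and `∂ₜ u = i (Δ u + lam |u|^σ u)`. -/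
def IsNLSSol (d : ℕ) (lam σ : ℝ) (u : ℝ → SchwartzMap (Ed d) ℂ) : Prop :=
  ContDiff ℝ (⊤ : ℕ∞) (fun p : ℝ × Ed d => u p.1 p.2) ∧
  ∀ t x, deriv (fun s => u s x) t =
    Complex.I * (lap (u t) x + ((lam * ‖u t x‖ ^ σ : ℝ) : ℂ) * u t x)


open scoped Topology LineDeriv

namespace LMG

variable {d : ℕ}

/-- The partial derivative as a Schwartz function. -/
def pdS (f : SchwartzMap (Ed d) ℂ) (i : Fin d) : SchwartzMap (Ed d) ℂ := ∂_{stdBasis i} f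

lemma pd_eq (f : SchwartzMap (Ed d) ℂ) (i : Fin d) : pd (⇑f) i = ⇑(pdS f i) := rfl

lemma intSq (f : SchwartzMap (Ed d) ℂ) : Integrable (fun x => ‖f x‖ ^ 2) := by
  have := (f.memLp 2 volume).integrable_norm_pow (by norm_num)
  simpa using this

lemma intGrad (f : SchwartzMap (Ed d) ℂ) : Integrable (gradNormSq (⇑f)) := by
  unfold gradNormSq
  exact integrable_finsetSum _ fun i _ => intSq (pdS f i)

lemma gradNormSq_nonneg (f : Ed d → ℂ) (x : Ed d) : 0 ≤ gradNormSq f x :=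
  Finset.sum_nonneg fun i _ => sq_nonneg _

lemma cont_gradNormSq (f : SchwartzMap (Ed d) ℂ) : Continuous (gradNormSq (⇑f)) := by
  unfold gradNormSq
  exact continuous_finsetSum _ fun i _ => ((pdS f i).continuous.norm.pow 2)

/-- Squared gradient norm. -/
def GG (f : SchwartzMap (Ed d) ℂ) : ℝ := ∫ x, gradNormSq (⇑f) x

lemma GG_nonneg (f : SchwartzMap (Ed d) ℂ) : 0 ≤ GG f :=
  integral_nonneg fun x => gradNormSq_nonneg _ _

lemma hasDerivAt_time {u : ℝ → SchwartzMap (Ed d) ℂ} (hu : IsLinSchrodSol d u) (t : ℝ) (x : Ed d) :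
    HasDerivAt (fun s => u s x) (Complex.I * lap (u t) x) t := by
  have h1 : Differentiable ℝ (fun p : ℝ × Ed d => u p.1 p.2) := hu.1.differentiable (by simp)
  have h2 : Differentiable ℝ (fun s : ℝ => u s x) :=
    h1.comp (f := fun s : ℝ => (s, x)) (by fun_prop)
  rw [← hu.2 t x]
  exact (h2 t).hasDerivAt

lemma cont_u {u : ℝ → SchwartzMap (Ed d) ℂ} (hu : IsLinSchrodSol d u) :
    Continuous (fun p : ℝ × Ed d => u p.1 p.2) := hu.1.continuous

lemma cont_lap {u : ℝ → SchwartzMap (Ed d) ℂ} (hu : IsLinSchrodSol d u) :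
    Continuous (fun p : ℝ × Ed d => Complex.I * lap (u p.1) p.2) := by
  have h1 : Differentiable ℝ (fun p : ℝ × Ed d => u p.1 p.2) := hu.1.differentiable (by simp)
  have h3 := hu.1.continuous_fderiv (by simp)
  have : (fun p : ℝ × Ed d => Complex.I * lap (u p.1) p.2) =
      fun p => fderiv ℝ (fun p : ℝ × Ed d => u p.1 p.2) p (1, 0) := by
    funext p
    have h4 : HasDerivAt (fun s : ℝ => (s, p.2)) ((1 : ℝ), (0 : Ed d)) p.1 :=
      (hasDerivAt_id p.1).prodMk (hasDerivAt_const _ _)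
    have h5 := (h1 (p.1, p.2)).hasFDerivAt.comp_hasDerivAt p.1 h4
    exact (hasDerivAt_time hu p.1 p.2).unique h5
  rw [this]
  exact h3.clm_apply continuous_const

lemma cont_pd {u : ℝ → SchwartzMap (Ed d) ℂ} (hu : IsLinSchrodSol d u) (i : Fin d) :
    Continuous (fun p : ℝ × Ed d => pd (u p.1) i p.2) := by
  have h1 : Differentiable ℝ (fun p : ℝ × Ed d => u p.1 p.2) := hu.1.differentiable (by simp)
  have h3 := hu.1.continuous_fderiv (by simp)
  have : (fun p : ℝ × Ed d => pd (u p.1) i p.2) =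
      fun p => fderiv ℝ (fun p : ℝ × Ed d => u p.1 p.2) p (0, stdBasis i) := by
    funext p
    have h4 : HasFDerivAt (fun y : Ed d => (p.1, y)) (ContinuousLinearMap.inr ℝ ℝ (Ed d)) p.2 :=
      hasFDerivAt_prodMk_right _ _
    have h5 := (h1 (p.1, p.2)).hasFDerivAt.comp p.2 h4
    have h6 : fderiv ℝ (⇑(u p.1)) p.2 = _ := h5.fderiv
    unfold pd
    rw [h6]
    simp
  rw [this]
  exact h3.clm_apply continuous_const

lemma cont_grad {u : ℝ → SchwartzMap (Ed d) ℂ} (hu : IsLinSchrodSol d u) :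
    Continuous (fun p : ℝ × Ed d => gradNormSq (u p.1) p.2) := by
  unfold gradNormSq
  exact continuous_finsetSum _ fun i _ => (cont_pd hu i).norm.pow 2

/-- Localized mass. -/
def hh (u : ℝ → SchwartzMap (Ed d) ℂ) (ψ : Ed d → ℝ) (t : ℝ) : ℝ :=
  ∫ x, ψ x ^ 2 * ‖u t x‖ ^ 2

lemma hh_nonneg (u : ℝ → SchwartzMap (Ed d) ℂ) (ψ : Ed d → ℝ) (t : ℝ) : 0 ≤ hh u ψ t :=
  integral_nonneg fun x => by positivity

lemma hasDerivAt_hh {u : ℝ → SchwartzMap (Ed d) ℂ} (hu : IsLinSchrodSol d u)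
    {ψ : Ed d → ℝ} (hψ : Continuous ψ) (hc : HasCompactSupport ψ) (t : ℝ) :
    HasDerivAt (hh u ψ)
      (∫ x, ψ x ^ 2 * (2 * ⟪u t x, Complex.I * lap (u t) x⟫)) t := by
  have hcont : Continuous (fun p : ℝ × Ed d =>
      ψ p.2 ^ 2 * (2 * ⟪u p.1 p.2, Complex.I * lap (u p.1) p.2⟫)) :=
    ((hψ.comp continuous_snd).pow 2).mul
      (continuous_const.mul ((cont_u hu).inner (cont_lap hu)))
  obtain ⟨C, hC⟩ := ((isCompact_closedBall t 1).prod hc.isCompact).exists_bound_of_continuousOn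
    hcont.continuousOn
  have hslice : ∀ s, Continuous (fun x => ψ x ^ 2 * ‖u s x‖ ^ 2) := fun s =>
    (hψ.pow 2).mul ((u s).continuous.norm.pow 2)
  refine (hasDerivAt_integral_of_dominated_loc_of_deriv_le
    (F := fun s x => ψ x ^ 2 * ‖u s x‖ ^ 2)
    (F' := fun s x => ψ x ^ 2 * (2 * ⟪u s x, Complex.I * lap (u s) x⟫))
    (s := Metric.closedBall t 1) (bound := (tsupport ψ).indicator fun _ => C)
    (Metric.closedBall_mem_nhds t one_pos) ?_ ?_ ?_ ?_ ?_ ?_).2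
  · exact Eventually.of_forall fun s => (hslice s).aestronglyMeasurable
  · refine (hslice t).integrable_of_hasCompactSupport ?_
    refine hc.mono' ((Function.support_subset_iff'.2 fun x hx => ?_))
    simp [image_eq_zero_of_notMem_tsupport hx]
  · exact (hcont.comp (Continuous.prodMk_right t)).aestronglyMeasurable
  · refine Eventually.of_forall fun x s hs => ?_
    by_cases hx : x ∈ tsupport ψ
    · rw [Set.indicator_of_mem hx]
      exact hC (s, x) ⟨hs, hx⟩
    · simp [image_eq_zero_of_notMem_tsupport hx, hx]
  · rw [integrable_indicator_iff (isClosed_tsupport ψ).measurableSet]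
    exact integrableOn_const hc.isCompact.measure_lt_top.ne
  · refine Eventually.of_forall fun x s _ => ?_
    exact ((hasDerivAt_time hu s x).norm_sq).const_mul _

lemma deriv_parts (f : SchwartzMap (Ed d) ℂ)
    {ψ : Ed d → ℝ} (hψ : ContDiff ℝ 1 ψ) (hc : HasCompactSupport ψ) (i : Fin d) :
    ∫ x, ψ x ^ 2 * ⟪f x, Complex.I * pd (pd (⇑f) i) i x⟫ =
      - ∫ x, 2 * (ψ x * fderiv ℝ ψ x (stdBasis i)) * ⟪f x, Complex.I * pd (⇑f) i x⟫ := by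
  set v : Ed d := stdBasis i
  let J : Ed d → ℝ := fun x => ⟪f x, Complex.I * pd (⇑f) i x⟫
  have hf : Differentiable ℝ f := f.differentiable
  have hg : Differentiable ℝ (pdS f i) := (pdS f i).differentiable
  have hJ : ∀ x, HasFDerivAt J (fderiv ℝ J x) x ∧
      fderiv ℝ J x v = ⟪f x, Complex.I * pd (pd (⇑f) i) i x⟫ := by
    intro x
    have h1 := (hf x).hasFDerivAt
    have h2 : HasFDerivAt (fun y => Complex.I * pd (⇑f) i y)
      (Complex.I • fderiv ℝ (⇑(pdS f i)) x) x := (hg x).hasFDerivAt.const_mul Complex.I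
    have h3 := h1.inner ℝ h2
    have h4 : HasFDerivAt J _ x := h3
    refine ⟨h4.differentiableAt.hasFDerivAt, ?_⟩
    rw [h4.fderiv]
    have h5 : ⟪fderiv ℝ (⇑f) x v, Complex.I * pd (⇑f) i x⟫ = 0 := by
      change ⟪pd (⇑f) i x, Complex.I * pd (⇑f) i x⟫ = 0
      simp [Complex.inner, Complex.mul_re]
      try ring
    change ⟪f x, Complex.I * pd (pd (⇑f) i) i x⟫ + ⟪fderiv ℝ (⇑f) x v, Complex.I * pd (⇑f) i x⟫ = _
    rw [h5, add_zero]
  have hd : ∀ x, fderiv ℝ (fun x => ψ x ^ 2) x v = 2 * (ψ x * fderiv ℝ ψ x v) := by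
    intro x
    have := ((hψ.differentiable (by simp)) x).hasFDerivAt.pow 2
    rw [this.fderiv]
    simp; ring
  have hψc := hψ.continuous
  have hψ'c : Continuous (fun x => fderiv ℝ ψ x v) :=
    (hψ.continuous_fderiv (by simp)).clm_apply continuous_const
  have hJc : Continuous J := f.continuous.inner (continuous_const.mul (pdS f i).continuous)
  have hJ'c : Continuous (fun x => ⟪f x, Complex.I * pd (pd (⇑f) i) i x⟫) :=
    f.continuous.inner (continuous_const.mul (pdS (pdS f i) i).continuous)
  have hsupp : ∀ g : Ed d → ℝ, Continuous g → (∀ x, ψ x = 0 → g x = 0) → Integrable g := by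
    intro g hg h0
    refine hg.integrable_of_hasCompactSupport (hc.mono fun x hx => ?_)
    intro h; exact hx (h0 x h)
  have := integral_mul_fderiv_eq_neg_fderiv_mul_of_integrable (μ := (volume : Measure (Ed d)))
    (f := fun x => ψ x ^ 2) (g := J) (v := v) ?_ ?_ ?_ ?_ ?_
  · simp only [hd, (hJ _).2] at this
    exact this
  · simp only [hd]
    exact hsupp _ (by fun_prop) (fun x hx => by simp [hx])
  · simp only [(hJ _).2]
    exact hsupp _ ((hψc.pow 2).mul hJ'c) (fun x hx => by simp [hx])
  · exact hsupp _ (by fun_prop) (fun x hx => by simp [hx])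
  · exact fun x _ => ((hψ.differentiable (by simp)) x).pow 2
  · exact fun x _ => (hJ x).1.differentiableAt

lemma cauchy (f g : Ed d → ℝ) (hf0 : ∀ x, 0 ≤ f x) (hg0 : ∀ x, 0 ≤ g x)
    (hf : Continuous f) (hg : Continuous g)
    (hf2 : Integrable (fun x => f x ^ 2)) (hg2 : Integrable (fun x => g x ^ 2)) :
    ∫ x, f x * g x ≤ √(∫ x, f x ^ 2) * √(∫ x, g x ^ 2) := by
  have := integral_mul_le_Lp_mul_Lq_of_nonneg (μ := (volume : Measure (Ed d)))
    (p := 2) (q := 2) (f := f) (g := g) Real.HolderConjugate.two_two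
    (Eventually.of_forall hf0) (Eventually.of_forall hg0) ?_ ?_
  · simpa [Real.sqrt_eq_rpow] using this
  · simpa using (memLp_two_iff_integrable_sq hf.aestronglyMeasurable).2 hf2
  · simpa using (memLp_two_iff_integrable_sq hg.aestronglyMeasurable).2 hg2

lemma pointwise_bound (f : SchwartzMap (Ed d) ℂ) (A : Ed d →L[ℝ] ℝ) {Λ : ℝ} (hA : ‖A‖ ≤ Λ)
    (x : Ed d) :
    |∑ i, A (stdBasis i) * ⟪f x, Complex.I * pd (⇑f) i x⟫| ≤
      Λ * (‖f x‖ * √(gradNormSq (⇑f) x)) := by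
  let c : Ed d := WithLp.toLp 2 fun i => ⟪f x, Complex.I * pd (⇑f) i x⟫
  have h1 : ∑ i, A (stdBasis i) * ⟪f x, Complex.I * pd (⇑f) i x⟫ = A c := by
    have hc : c = ∑ i, c i • (stdBasis i : Ed d) := by
      ext j
      simp [stdBasis, Finset.sum_apply, Pi.single_apply]
    rw [hc, map_sum]
    refine Finset.sum_congr rfl fun i _ => ?_
    rw [map_smul, smul_eq_mul, mul_comm]
  have h2 : ‖c‖ ≤ ‖f x‖ * √(gradNormSq (⇑f) x) := by
    rw [EuclideanSpace.norm_eq]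
    refine Real.sqrt_le_iff.2 ⟨by positivity, ?_⟩
    rw [mul_pow, Real.sq_sqrt (gradNormSq_nonneg _ _), gradNormSq, Finset.mul_sum]
    refine Finset.sum_le_sum fun i _ => ?_
    rw [← mul_pow]
    refine pow_le_pow_left₀ (norm_nonneg _) ?_ 2
    refine (norm_inner_le_norm _ _).trans ?_
    simp
  rw [h1]
  calc |A c| ≤ ‖A‖ * ‖c‖ := A.le_opNorm c
    _ ≤ _ := mul_le_mul hA h2 (norm_nonneg _) ((norm_nonneg _).trans hA)

lemma deriv_bound (f : SchwartzMap (Ed d) ℂ)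
    {ψ : Ed d → ℝ} (hψ : ContDiff ℝ 1 ψ) (hc : HasCompactSupport ψ) {Λ : ℝ}
    (hΛ : ∀ x, ‖fderiv ℝ ψ x‖ ≤ Λ) :
    |∫ x, ψ x ^ 2 * (2 * ⟪f x, Complex.I * lap (⇑f) x⟫)| ≤
      4 * Λ * (√(∫ x, ψ x ^ 2 * ‖f x‖ ^ 2) * √(GG f)) := by
  have hψc := hψ.continuous
  have hsupp : ∀ g : Ed d → ℝ, Continuous g → (∀ x, ψ x = 0 → g x = 0) → Integrable g := by
    intro g hg h0
    refine hg.integrable_of_hasCompactSupport (hc.mono fun x hx => ?_)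
    intro h; exact hx (h0 x h)
  have hJc : ∀ i, Continuous fun x => ⟪f x, Complex.I * pd (⇑f) i x⟫ := fun i =>
    f.continuous.inner (continuous_const.mul (pdS f i).continuous)
  have hJ'c : ∀ i, Continuous (fun x => ⟪f x, Complex.I * pd (pd (⇑f) i) i x⟫) := fun i =>
    f.continuous.inner (continuous_const.mul (pdS (pdS f i) i).continuous)
  have hψ'c : ∀ i : Fin d, Continuous (fun x => fderiv ℝ ψ x (stdBasis i)) := fun i =>
    (hψ.continuous_fderiv (by simp)).clm_apply continuous_const
  have h1 : ∫ x, ψ x ^ 2 * (2 * ⟪f x, Complex.I * lap (⇑f) x⟫) =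
      - ∫ x, 4 * (ψ x * ∑ i, fderiv ℝ ψ x (stdBasis i) * ⟪f x, Complex.I * pd (⇑f) i x⟫) := by
    have e1 : ∀ x, ψ x ^ 2 * (2 * ⟪f x, Complex.I * lap (⇑f) x⟫) =
        ∑ i, 2 * (ψ x ^ 2 * ⟪f x, Complex.I * pd (pd (⇑f) i) i x⟫) := by
      intro x
      rw [lap, Finset.mul_sum, inner_sum, Finset.mul_sum, Finset.mul_sum]
      exact Finset.sum_congr rfl fun i _ => by ring
    have e2 : ∀ x, 4 * (ψ x * ∑ i, fderiv ℝ ψ x (stdBasis i) * ⟪f x, Complex.I * pd (⇑f) i x⟫)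
        = ∑ i, 2 * (2 * (ψ x * fderiv ℝ ψ x (stdBasis i)) * ⟪f x, Complex.I * pd (⇑f) i x⟫) := by
      intro x
      rw [Finset.mul_sum, Finset.mul_sum]
      exact Finset.sum_congr rfl fun i _ => by ring
    simp only [e1, e2]
    rw [integral_finsetSum, integral_finsetSum, ← Finset.sum_neg_distrib]
    · refine Finset.sum_congr rfl fun i _ => ?_
      rw [integral_const_mul, integral_const_mul, deriv_parts f hψ hc i, mul_neg]
    · intro i _
      have := hJc i
      have := hψ'c i
      exact hsupp _ (by fun_prop) (fun x hx => by simp [hx])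
    · intro i _
      have := hJ'c i
      exact hsupp _ (by fun_prop) (fun x hx => by simp [hx])
  rw [h1, abs_neg]
  have hΛ0 : 0 ≤ Λ := (norm_nonneg _).trans (hΛ 0)
  have hg : Continuous fun x => √(gradNormSq (⇑f) x) := (cont_gradNormSq f).sqrt
  have hf := f.continuous
  have hb : ∀ x, ‖4 * (ψ x * ∑ i, fderiv ℝ ψ x (stdBasis i) * ⟪f x, Complex.I * pd (⇑f) i x⟫)‖ ≤
      4 * Λ * ((|ψ x| * ‖f x‖) * √(gradNormSq (⇑f) x)) := by
    intro x
    have := pointwise_bound f (fderiv ℝ ψ x) (hΛ x) x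
    rw [norm_mul, norm_mul, Real.norm_eq_abs (ψ x), Real.norm_eq_abs (Finset.sum _ _)]
    calc _ ≤ ‖(4:ℝ)‖ * (|ψ x| * (Λ * (‖f x‖ * √(gradNormSq (⇑f) x)))) := by gcongr
      _ = _ := by norm_num; ring
  refine (norm_integral_le_of_norm_le ?_ (Eventually.of_forall hb)).trans ?_
  · exact hsupp _ (by fun_prop) (fun x hx => by simp [hx])
  · rw [integral_const_mul]
    refine mul_le_mul_of_nonneg_left ?_ (by positivity)
    have e : ∀ x, (|ψ x| * ‖f x‖) ^ 2 = ψ x ^ 2 * ‖f x‖ ^ 2 := fun x => by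
      rw [mul_pow, sq_abs]
    have e' : ∀ x, √(gradNormSq (⇑f) x) ^ 2 = gradNormSq (⇑f) x := fun x =>
      Real.sq_sqrt (gradNormSq_nonneg _ _)
    have := cauchy (fun x => |ψ x| * ‖f x‖) (fun x => √(gradNormSq (⇑f) x))
      (fun x => by positivity) (fun x => by positivity) (by fun_prop) hg
      (hsupp _ (by fun_prop) (fun x hx => by simp [hx])) (by simpa only [e'] using intGrad f)
    simp only [e, e'] at this
    exact this

lemma core {u : ℝ → SchwartzMap (Ed d) ℂ} (hu : IsLinSchrodSol d u)
    {ψ : Ed d → ℝ} (hψ : ContDiff ℝ 1 ψ) (hc : HasCompactSupport ψ) {Λ : ℝ}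
    (hΛ : ∀ x, ‖fderiv ℝ ψ x‖ ≤ Λ) {a b B : ℝ} (hab : a ≤ b)
    (hB : ∀ s ∈ Set.Ioo a b, √(GG (u s)) ≤ B) :
    |√(hh u ψ b) - √(hh u ψ a)| ≤ 2 * Λ * B * (b - a) := by
  have hΛ0 : 0 ≤ Λ := (norm_nonneg _).trans (hΛ 0)
  have key : ∀ ε > 0, |√(hh u ψ b + ε) - √(hh u ψ a + ε)| ≤ 2 * Λ * B * (b - a) := by
    intro ε hε
    have hD : ∀ s, HasDerivAt (fun s => √(hh u ψ s + ε)) _ s := fun s =>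
      ((hasDerivAt_hh hu hψ.continuous hc s).add_const ε).sqrt
        (by have := hh_nonneg u ψ s; positivity)
    have hbd : ∀ s ∈ Set.Ioo a b, |deriv (fun s => √(hh u ψ s + ε)) s| ≤ 2 * Λ * B := by
      intro s hs
      rw [(hD s).deriv]
      have h1 := deriv_bound (u s) hψ hc hΛ
      have h0 := hh_nonneg u ψ s
      have hpos : 0 < √(hh u ψ s + ε) := Real.sqrt_pos.2 (by positivity)
      rw [abs_div, abs_of_pos (by positivity : 0 < 2 * √(hh u ψ s + ε)),
        div_le_iff₀ (by positivity)]
      refine h1.trans ?_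
      have h2 : √(∫ x, ψ x ^ 2 * ‖u s x‖ ^ 2) ≤ √(hh u ψ s + ε) :=
        Real.sqrt_le_sqrt (by change hh u ψ s ≤ _; linarith)
      calc _ ≤ 4 * Λ * (√(hh u ψ s + ε) * B) := by
            gcongr
            exact hB s hs
        _ = _ := by ring
    have hcont : ContinuousOn (fun s => √(hh u ψ s + ε)) (Set.Icc a b) :=
      fun s _ => (hD s).continuousAt.continuousWithinAt
    have hdiff : DifferentiableOn ℝ (fun s => √(hh u ψ s + ε)) (interior (Set.Icc a b)) :=
      fun s _ => (hD s).differentiableAt.differentiableWithinAt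
    have u1 := (convex_Icc a b).image_sub_le_mul_sub_of_deriv_le hcont hdiff (C := 2 * Λ * B)
      (fun s hs => by rw [interior_Icc] at hs; exact (abs_le.1 (hbd s hs)).2)
      a (Set.left_mem_Icc.2 hab) b (Set.right_mem_Icc.2 hab) hab
    have u2 := (convex_Icc a b).mul_sub_le_image_sub_of_le_deriv hcont hdiff (C := -(2 * Λ * B))
      (fun s hs => by rw [interior_Icc] at hs; exact (abs_le.1 (hbd s hs)).1)
      a (Set.left_mem_Icc.2 hab) b (Set.right_mem_Icc.2 hab) hab
    rw [abs_le]
    constructor <;> linarith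
  have hlim : Tendsto (fun ε : ℝ => |√(hh u ψ b + ε) - √(hh u ψ a + ε)|) (𝓝[>] 0)
      (𝓝 |√(hh u ψ b + 0) - √(hh u ψ a + 0)|) := by
    refine Tendsto.mono_left (Continuous.tendsto ?_ 0) nhdsWithin_le_nhds
    fun_prop
  simp only [add_zero] at hlim
  exact le_of_tendsto hlim (eventually_mem_nhdsWithin.mono fun ε hε => key ε hε)

lemma exists_cutoff (d : ℕ) : ∃ (χ : ℕ → Ed d → ℝ) (D : ℝ), (∀ n, ContDiff ℝ 1 (χ n)) ∧
    (∀ n, HasCompactSupport (χ n)) ∧ (∀ n x, |χ n x| ≤ 1) ∧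
    (∀ n x, ‖fderiv ℝ (χ n) x‖ ≤ D / ((n : ℝ) + 1)) ∧
    (∀ x, Tendsto (fun n => χ n x) atTop (𝓝 1)) := by
  let f : ContDiffBump (0 : Ed d) := ⟨1, 2, one_pos, one_lt_two⟩
  have hf : ContDiff ℝ 1 f := f.contDiff
  have hfs : HasCompactSupport (f : Ed d → ℝ) := f.hasCompactSupport
  obtain ⟨D, hD⟩ := (hf.continuous_fderiv (by simp)).bounded_above_of_compact_support
    (hfs.fderiv (𝕜 := ℝ))
  have hn : ∀ n : ℕ, (0 : ℝ) < (n : ℝ) + 1 := fun n => by positivity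
  refine ⟨fun n x => f (((n : ℝ) + 1)⁻¹ • x), D, ?_, ?_, ?_, ?_, ?_⟩
  · intro n
    exact hf.comp (contDiff_const_smul _)
  · intro n
    exact hfs.comp_homeomorph (Homeomorph.smulOfNeZero _ (inv_ne_zero (hn n).ne'))
  · intro n x
    rw [abs_of_nonneg f.nonneg]
    exact f.le_one
  · intro n x
    have h1 : HasFDerivAt (fun x : Ed d => ((n : ℝ) + 1)⁻¹ • x)
        (((n : ℝ) + 1)⁻¹ • ContinuousLinearMap.id ℝ (Ed d)) x :=
      (hasFDerivAt_id (𝕜 := ℝ) x).fun_const_smul (((n : ℝ) + 1)⁻¹)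
    have h2 := ((hf.differentiable (by simp)) (((n : ℝ) + 1)⁻¹ • x)).hasFDerivAt.comp x h1
    have h3 : fderiv ℝ (fun x : Ed d => f (((n : ℝ) + 1)⁻¹ • x)) x = _ := h2.fderiv
    rw [h3, ContinuousLinearMap.comp_smul, norm_smul, norm_inv, Real.norm_of_nonneg (hn n).le,
      ContinuousLinearMap.comp_id, div_eq_inv_mul]
    exact mul_le_mul_of_nonneg_left (hD _) (inv_nonneg.2 (hn n).le)
  · intro x
    refine tendsto_const_nhds.congr' ?_
    obtain ⟨N, hN⟩ := exists_nat_ge ‖x‖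
    filter_upwards [eventually_ge_atTop N] with n hnN
    symm
    apply f.one_of_mem_closedBall
    rw [mem_closedBall_zero_iff, norm_smul, norm_inv, Real.norm_of_nonneg (hn n).le,
      inv_mul_le_iff₀ (hn n)]
    have : (N : ℝ) ≤ n := by exact_mod_cast hnN
    change ‖x‖ ≤ ((n : ℝ) + 1) * 1
    linarith

lemma growth {u : ℝ → SchwartzMap (Ed d) ℂ} (hu : IsLinSchrodSol d u)
    {φ : Ed d → ℝ} (hφ : ContDiff ℝ 1 φ) {C L : ℝ} (hC : ∀ x, |φ x| ≤ C)
    (hL : ∀ x, ‖fderiv ℝ φ x‖ ≤ L) {a b B : ℝ} (hab : a ≤ b)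
    (hB : ∀ s ∈ Set.Ioo a b, √(GG (u s)) ≤ B) :
    |√(hh u φ b) - √(hh u φ a)| ≤ 2 * L * B * (b - a) := by
  obtain ⟨χ, D, h1, h2, h3, h4, h5⟩ := exists_cutoff d
  have hC0 : 0 ≤ C := (abs_nonneg _).trans (hC 0)
  have hL0 : 0 ≤ L := (norm_nonneg _).trans (hL 0)
  have hk : ∀ n : ℕ, |√(hh u (fun x => χ n x * φ x) b) - √(hh u (fun x => χ n x * φ x) a)| ≤
      2 * (L + C * (D / ((n : ℝ) + 1))) * B * (b - a) := by
    intro n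
    refine core hu ((h1 n).mul hφ) ((h2 n).mul_right) ?_ hab hB
    intro x
    have e := (((h1 n).differentiable (by simp)) x).hasFDerivAt.mul
      ((hφ.differentiable (by simp)) x).hasFDerivAt
    have e' : fderiv ℝ (fun x => χ n x * φ x) x = _ := e.fderiv
    rw [e']
    refine (norm_add_le _ _).trans ?_
    rw [norm_smul, norm_smul, Real.norm_eq_abs, Real.norm_eq_abs]
    refine add_le_add ?_ ?_
    · calc _ ≤ 1 * L := mul_le_mul (h3 n x) (hL x) (norm_nonneg _) zero_le_one
        _ = L := one_mul L
    · exact mul_le_mul (hC x) (h4 n x) (norm_nonneg _) hC0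
  have hlim : ∀ t, Tendsto (fun n => hh u (fun x => χ n x * φ x) t) atTop (𝓝 (hh u φ t)) := by
    intro t
    have hut := (u t).continuous
    have hφc := hφ.continuous
    refine tendsto_integral_of_dominated_convergence (fun x => C ^ 2 * ‖u t x‖ ^ 2) ?_ ?_ ?_ ?_
    · intro n
      have := (h1 n).continuous
      exact Continuous.aestronglyMeasurable (by fun_prop)
    · exact (intSq (u t)).const_mul _
    · intro n
      refine Eventually.of_forall fun x => ?_
      rw [Real.norm_of_nonneg (by positivity)]
      refine mul_le_mul_of_nonneg_right ?_ (by positivity)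
      rw [← sq_abs]
      refine pow_le_pow_left₀ (abs_nonneg _) ?_ 2
      rw [abs_mul]
      calc _ ≤ 1 * C := mul_le_mul (h3 n x) (hC x) (abs_nonneg _) zero_le_one
        _ = C := one_mul C
    · refine Eventually.of_forall fun x => ?_
      have := (((h5 x).mul_const (φ x)).pow 2).mul_const (‖u t x‖ ^ 2)
      simpa using this
  have hlhs := ((hlim b).sqrt.sub (hlim a).sqrt).abs
  have hz : Tendsto (fun n : ℕ => D / ((n : ℝ) + 1)) atTop (𝓝 0) :=
    tendsto_const_nhds.div_atTop (tendsto_natCast_atTop_atTop.atTop_add tendsto_const_nhds)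
  have hrhs : Tendsto (fun n : ℕ => 2 * (L + C * (D / ((n : ℝ) + 1))) * B * (b - a)) atTop
      (𝓝 (2 * (L + C * 0) * B * (b - a))) :=
    ((((hz.const_mul C).const_add L).const_mul 2).mul_const B).mul_const (b - a)
  have := le_of_tendsto_of_tendsto' hlhs hrhs hk
  simpa using this

lemma mass_const {u : ℝ → SchwartzMap (Ed d) ℂ} (hu : IsLinSchrodSol d u)
    {a b B : ℝ} (hab : a ≤ b) (hB : ∀ s ∈ Set.Ioo a b, GG (u s) ≤ B) :
    ∫ x, ‖u b x‖ ^ 2 = ∫ x, ‖u a x‖ ^ 2 := by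
  have h := growth hu (φ := fun _ => 1) contDiff_const (C := 1) (L := 0) (by simp) (by simp) hab
    (B := √B) (fun s hs => Real.sqrt_le_sqrt (hB s hs))
  have e : ∀ t, hh u (fun _ => 1) t = ∫ x, ‖u t x‖ ^ 2 := fun t => by simp [hh]
  rw [mul_zero, zero_mul, zero_mul, abs_nonpos_iff, sub_eq_zero,
    Real.sqrt_inj (hh_nonneg _ _ _) (hh_nonneg _ _ _), e, e] at h
  exact h

/-- Difference of a translate and the function. -/
def diffS (e : Ed d) (f : SchwartzMap (Ed d) ℂ) : SchwartzMap (Ed d) ℂ :=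
  SchwartzMap.compSubConstCLM ℝ e f - f

lemma diffS_apply (e : Ed d) (f : SchwartzMap (Ed d) ℂ) (x : Ed d) :
    diffS e f x = f (x - e) - f x := rfl

lemma pdS_diffS (e : Ed d) (f : SchwartzMap (Ed d) ℂ) (i : Fin d) :
    pdS (diffS e f) i = diffS e (pdS f i) := by
  ext x
  rw [diffS_apply]
  change fderiv ℝ (fun y => f (y - e) - f y) x (stdBasis i) =
    fderiv ℝ f (x - e) (stdBasis i) - fderiv ℝ f x (stdBasis i)
  have h : Differentiable ℝ f := f.differentiable
  have h1 : DifferentiableAt ℝ (fun y => f (y - e)) x :=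
    (h (x - e)).comp x (differentiableAt_id.sub_const e)
  rw [fderiv_fun_sub h1 (h x), fderiv_comp_sub]
  rfl

lemma lap_diffS (e : Ed d) (f : SchwartzMap (Ed d) ℂ) (x : Ed d) :
    lap (diffS e f) x = lap f (x - e) - lap f x := by
  have hl : ∀ (g : SchwartzMap (Ed d) ℂ) y, lap g y = ∑ i, pdS (pdS g i) i y := fun _ _ => rfl
  rw [hl, hl, hl, ← Finset.sum_sub_distrib]
  refine Finset.sum_congr rfl fun i _ => ?_
  rw [pdS_diffS, pdS_diffS, diffS_apply]

lemma sol_diffS (e : Ed d) {u : ℝ → SchwartzMap (Ed d) ℂ} (hu : IsLinSchrodSol d u) :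
    IsLinSchrodSol d (fun t => diffS e (u t)) := by
  refine ⟨?_, ?_⟩
  · have h1 : ContDiff ℝ (⊤ : ℕ∞) (fun p : ℝ × Ed d => (p.1, p.2 - e)) := by fun_prop
    exact (hu.1.comp h1).sub hu.1
  · intro t x
    have := (hasDerivAt_time hu t (x - e)).sub (hasDerivAt_time hu t x)
    rw [lap_diffS, mul_sub]
    exact this.deriv

lemma GG_diffS (e : Ed d) (f : SchwartzMap (Ed d) ℂ) : GG (diffS e f) ≤ 4 * GG f := by
  have hi := intGrad f
  have hi' : Integrable (fun x => gradNormSq (⇑f) (x - e)) := hi.comp_sub_right e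
  have hb : ∀ x, gradNormSq (⇑(diffS e f)) x ≤
      2 * gradNormSq (⇑f) (x - e) + 2 * gradNormSq (⇑f) x := by
    intro x
    simp only [gradNormSq, Finset.mul_sum, ← Finset.sum_add_distrib]
    refine Finset.sum_le_sum fun i _ => ?_
    rw [pd_eq, pd_eq, pdS_diffS, diffS_apply]
    have := norm_sub_le (pdS f i (x - e)) (pdS f i x)
    nlinarith [norm_nonneg (pdS f i (x - e) - pdS f i x), norm_nonneg (pdS f i (x - e)),
      norm_nonneg (pdS f i x), sq_nonneg (‖pdS f i (x - e)‖ - ‖pdS f i x‖)]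
  have := integral_mono (intGrad (diffS e f)) ((hi'.const_mul 2).add (hi.const_mul 2)) hb
  refine this.trans (le_of_eq ?_)
  have h2 := integral_add (hi'.const_mul 2) (hi.const_mul 2)
  simp only [Pi.add_apply] at h2 ⊢
  rw [h2, integral_const_mul, integral_const_mul, integral_sub_right_eq_self (gradNormSq (⇑f)) e, GG]
  ring

lemma fderiv_decay (f : SchwartzMap (Ed d) ℂ) (k : ℕ) :
    ∃ C, 0 ≤ C ∧ ∀ x, ‖fderiv ℝ f x‖ ≤ C * ((1 + ‖x‖) ^ k)⁻¹ := by
  refine ⟨2 ^ k * ((Finset.Iic (k, 1)).sup fun m => SchwartzMap.seminorm ℝ m.1 m.2) f,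
    by positivity, fun x => ?_⟩
  have := SchwartzMap.one_add_le_sup_seminorm_apply (𝕜 := ℝ) (m := (k, 1)) (le_refl k)
    (le_refl 1) f x
  rw [norm_iteratedFDeriv_one] at this
  rw [← div_eq_mul_inv, le_div_iff₀ (by positivity), mul_comm]
  exact this

lemma diff_bound (f : SchwartzMap (Ed d) ℂ) (k : ℕ) :
    ∃ C, 0 ≤ C ∧ ∀ x e : Ed d, ‖e‖ ≤ 1 → ‖f (x - e) - f x‖ ≤ C * ((1 + ‖x‖) ^ k)⁻¹ * ‖e‖ := by
  obtain ⟨C, hC0, hC⟩ := fderiv_decay f k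
  refine ⟨C * 2 ^ k, by positivity, fun x e he => ?_⟩
  have hb : ∀ y ∈ Metric.closedBall x 1, ‖fderiv ℝ f y‖ ≤ C * 2 ^ k * ((1 + ‖x‖) ^ k)⁻¹ := by
    intro y hy
    refine (hC y).trans ?_
    rw [mul_assoc]
    refine mul_le_mul_of_nonneg_left ?_ hC0
    rw [← div_eq_mul_inv, ← div_pow, ← inv_pow]
    refine pow_le_pow_left₀ (by positivity) ?_ k
    rw [inv_eq_one_div, div_le_div_iff₀ (by positivity) (by positivity)]
    have h1 : ‖x‖ ≤ ‖y‖ + 1 := by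
      have h2 : dist y x ≤ 1 := hy
      rw [dist_eq_norm] at h2
      have h3 := norm_sub_norm_le x y
      rw [norm_sub_rev] at h3
      linarith
    linarith [norm_nonneg y]
  have := (convex_closedBall x (1 : ℝ)).norm_image_sub_le_of_norm_fderiv_le (𝕜 := ℝ) (f := f)
    (fun y _ => f.differentiableAt) hb (Metric.mem_closedBall_self zero_le_one)
    (y := x - e) (by simpa [dist_eq_norm] using he)
  simpa using this

lemma quot_lim (f : SchwartzMap (Ed d) ℂ) (i : Fin d) :
    Tendsto (fun n : ℕ => ((n : ℝ) + 1) ^ 2 *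
      ∫ x, ‖diffS (-((((n : ℝ) + 1)⁻¹) • stdBasis i)) f x‖ ^ 2) atTop
      (𝓝 (∫ x, ‖pd (⇑f) i x‖ ^ 2)) := by
  obtain ⟨C, hC0, hC⟩ := diff_bound f (d + 1)
  have hn : ∀ n : ℕ, (0 : ℝ) < (n : ℝ) + 1 := fun n => by positivity
  have hnorm : ∀ n : ℕ, ‖-((((n : ℝ) + 1)⁻¹) • (stdBasis i : Ed d))‖ = ((n : ℝ) + 1)⁻¹ := by
    intro n
    rw [norm_neg, norm_smul, norm_inv, Real.norm_of_nonneg (hn n).le]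
    simp [stdBasis]
  simp_rw [← integral_const_mul]
  refine tendsto_integral_of_dominated_convergence
    (fun x => C ^ 2 * (1 + ‖x‖) ^ (-(2 * (d + 1) : ℝ))) ?_ ?_ ?_ ?_
  · intro n
    exact ((diffS _ f).continuous.norm.pow 2).const_mul _ |>.aestronglyMeasurable
  · refine (integrable_one_add_norm ?_).const_mul _
    simp
    linarith [(Nat.cast_nonneg d : (0 : ℝ) ≤ d)]
  · intro n
    refine Eventually.of_forall fun x => ?_
    rw [Real.norm_of_nonneg (by positivity), ← mul_pow]
    have h1 := hC x _ ((hnorm n).trans_le (inv_le_one_of_one_le₀ (by linarith [hn n, (Nat.cast_nonneg n : (0:ℝ) ≤ n)])))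
    rw [hnorm n] at h1
    rw [diffS_apply]
    have h2 : ((n : ℝ) + 1) * ‖f (x - -((((n : ℝ) + 1)⁻¹) • stdBasis i)) - f x‖ ≤
        C * ((1 + ‖x‖) ^ (d + 1))⁻¹ := by
      rw [mul_comm]
      rwa [← div_eq_mul_inv, le_div_iff₀ (hn n)] at h1
    refine (pow_le_pow_left₀ (by positivity) h2 2).trans (le_of_eq ?_)
    rw [mul_pow, Real.rpow_neg (by positivity), inv_pow, ← pow_mul]
    congr 2
    rw [← Real.rpow_natCast]
    congr 1
    push_cast
    ring
  · refine Eventually.of_forall fun x => ?_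
    have h1 : HasLineDerivAt ℝ f (pd (⇑f) i x) x (stdBasis i) :=
      (f.differentiableAt (x := x)).hasFDerivAt.hasLineDerivAt (stdBasis i)
    have h2 := h1.tendsto_slope_zero_right
    have h3 : Tendsto (fun n : ℕ => ((n : ℝ) + 1)⁻¹) atTop (𝓝[>] 0) := by
      refine tendsto_nhdsWithin_iff.2 ⟨?_, Eventually.of_forall fun n => inv_pos.2 (hn n)⟩
      simpa using tendsto_one_div_add_atTop_nhds_zero_nat (𝕜 := ℝ)
    have h4 := ((h2.comp h3).norm).pow 2
    refine h4.congr fun n => ?_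
    simp only [Function.comp, inv_inv, norm_smul, mul_pow, diffS_apply, sub_neg_eq_add]
    rw [Real.norm_of_nonneg (hn n).le]

lemma GG_eq (f : SchwartzMap (Ed d) ℂ) : GG f = ∑ i, ∫ x, ‖pd (⇑f) i x‖ ^ 2 := by
  unfold GG gradNormSq
  exact integral_finsetSum _ fun i _ => intSq (pdS f i)

lemma GG_const {u : ℝ → SchwartzMap (Ed d) ℂ} (hu : IsLinSchrodSol d u)
    {a b B : ℝ} (hab : a ≤ b) (hB : ∀ s ∈ Set.Ioo a b, GG (u s) ≤ B) :
    GG (u b) = GG (u a) := by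
  rw [GG_eq, GG_eq]
  refine Finset.sum_congr rfl fun i _ => ?_
  refine tendsto_nhds_unique (quot_lim (u b) i) ((quot_lim (u a) i).congr fun n => ?_)
  congr 1
  exact (mass_const (sol_diffS _ hu) hab (B := 4 * B)
    (fun s hs => (GG_diffS _ _).trans (by linarith [hB s hs]))).symm

lemma GG_closed {u : ℝ → SchwartzMap (Ed d) ℂ} (hu : IsLinSchrodSol d u) (c : ℝ) :
    IsClosed {t | GG (u t) ≤ c} := by
  have e : {t | GG (u t) ≤ c} =
      ⋂ m : ℕ, {t | ∫ x in Metric.closedBall (0 : Ed d) m, gradNormSq (u t) x ≤ c} := by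
    ext t
    simp only [Set.mem_setOf_eq, Set.mem_iInter]
    constructor
    · intro h m
      exact (setIntegral_le_integral (intGrad (u t))
        (Eventually.of_forall fun x => gradNormSq_nonneg _ x)).trans h
    · intro h
      have hU : (⋃ m : ℕ, Metric.closedBall (0 : Ed d) m) = Set.univ :=
        Metric.iUnion_closedBall_nat 0
      have := tendsto_setIntegral_of_monotone (μ := (volume : Measure (Ed d)))
        (s := fun m : ℕ => Metric.closedBall (0 : Ed d) m) (f := gradNormSq (u t))
        (fun m => Metric.isClosed_closedBall.measurableSet)
        (fun m n hmn => Metric.closedBall_subset_closedBall (by exact_mod_cast hmn))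
        (intGrad (u t)).integrableOn
      rw [hU, setIntegral_univ] at this
      exact le_of_tendsto' this h
  rw [e]
  refine isClosed_iInter fun m => isClosed_le ?_ continuous_const
  exact continuous_parametric_integral_of_continuous (f := fun t x => gradNormSq (u t) x)
    (cont_grad hu) (isCompact_closedBall _ _)

/-- An abstract Baire argument. -/
lemma baire_const (g : ℝ → ℝ) (hclosed : ∀ c, IsClosed {t | g t ≤ c})
    (hconst : ∀ a b B : ℝ, a ≤ b → (∀ s ∈ Set.Ioo a b, g s ≤ B) → g b = g a) :
    ∀ a b : ℝ, a ≤ b → g b = g a := by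
  let U : Set ℝ := {t | ∃ B, ∀ᶠ s in 𝓝 t, g s ≤ B}
  have hUo : IsOpen U := by
    rw [isOpen_iff_mem_nhds]
    rintro t ⟨B, hB⟩
    exact hB.eventually_nhds.mono fun s hs => ⟨B, hs⟩
  have hUc : ∀ a b, a ≤ b → Set.Icc a b ⊆ U → g b = g a := by
    intro a b hab hsub
    have : ∃ B, ∀ s ∈ Set.Icc a b, g s ≤ B := by
      refine isCompact_Icc.induction_on (p := fun S => ∃ B, ∀ s ∈ S, g s ≤ B) ?_ ?_ ?_ ?_
      · exact ⟨0, by simp⟩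
      · rintro s t hst ⟨B, hB⟩
        exact ⟨B, fun x hx => hB x (hst hx)⟩
      · rintro s t ⟨B, hB⟩ ⟨B', hB'⟩
        refine ⟨max B B', ?_⟩
        rintro x (hx | hx)
        · exact (hB x hx).trans (le_max_left _ _)
        · exact (hB' x hx).trans (le_max_right _ _)
      · intro x hx
        obtain ⟨B, hB⟩ := hsub hx
        exact ⟨_, mem_nhdsWithin_of_mem_nhds hB, B, fun s hs => hs⟩
    obtain ⟨B, hB⟩ := this
    exact hconst a b B hab fun s hs => hB s ⟨hs.1.le, hs.2.le⟩
  suffices hU : U = Set.univ by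
    intro a b hab
    exact hUc a b hab (by rw [hU]; exact Set.subset_univ _)
  by_contra hne
  let K : Set ℝ := Uᶜ
  have hKc : IsClosed K := hUo.isClosed_compl
  have hKne : K.Nonempty := Set.nonempty_compl.2 hne
  haveI : Nonempty K := hKne.to_subtype
  haveI : CompleteSpace K := hKc.completeSpace_coe
  obtain ⟨n, ⟨t0, ht0⟩⟩ := nonempty_interior_of_iUnion_of_closed (X := K)
    (f := fun n : ℕ => {t : K | g t ≤ n})
    (fun n => (hclosed n).preimage continuous_subtype_val)
    (by
      ext t
      simp only [Set.mem_iUnion, Set.mem_setOf_eq, Set.mem_univ, iff_true]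
      exact exists_nat_ge _)
  obtain ⟨ε, hε, hball⟩ := Metric.mem_nhds_iff.1 (mem_interior_iff_mem_nhds.1 ht0)
  have hK : ∀ s ∈ K, |s - t0| < ε → g s ≤ n := by
    intro s hs hd
    exact hball (show (⟨s, hs⟩ : K) ∈ Metric.ball t0 ε from hd)
  refine t0.2 ⟨n, ?_⟩
  filter_upwards [Metric.ball_mem_nhds (t0 : ℝ) hε] with s hs
  rw [Metric.mem_ball, Real.dist_eq] at hs
  by_cases hsK : s ∈ K
  · exact hK s hsK hs
  have hst : s ≠ t0 := fun h => hsK (h ▸ t0.2)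
  rcases lt_or_gt_of_ne hst with hlt | hgt
  · have hS : IsCompact (K ∩ Set.Icc s t0) := isCompact_Icc.inter_left hKc
    obtain ⟨β, ⟨hβK, hβ⟩, hmin⟩ := hS.exists_isLeast ⟨t0, t0.2, hlt.le, le_rfl⟩
    have hin : ∀ r ∈ Set.Ioo s β, g r = g s := by
      intro r hr
      refine hUc s r hr.1.le fun q hq => ?_
      by_contra hqU
      exact absurd (hmin ⟨hqU, hq.1, (hq.2.trans hr.2.le).trans hβ.2⟩) (not_le.2 (hq.2.trans_lt hr.2))
    rw [← hconst s β (g s) hβ.1 fun r hr => (hin r hr).le]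
    refine hK β hβK ?_
    rw [abs_lt] at hs ⊢
    constructor <;> linarith [hβ.1, hβ.2]
  · have hS : IsCompact (K ∩ Set.Icc t0 s) := isCompact_Icc.inter_left hKc
    obtain ⟨β, ⟨hβK, hβ⟩, hmax⟩ := hS.exists_isGreatest ⟨t0, t0.2, le_rfl, hgt.le⟩
    have hin : ∀ r ∈ Set.Ioo β s, g r = g s := by
      intro r hr
      refine (hUc r s hr.2.le fun q hq => ?_).symm
      by_contra hqU
      exact absurd (hmax ⟨hqU, (hβ.1.trans hr.1.le).trans hq.1, hq.2⟩) (not_le.2 (hr.1.trans_le hq.1))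
    rw [hconst β s (g s) hβ.2 fun r hr => (hin r hr).le]
    refine hK β hβK ?_
    rw [abs_lt] at hs ⊢
    constructor <;> linarith [hβ.1, hβ.2]

end LMG

/-- For a Schwartz solution of the linear Schrödinger equation and a bounded
`C¹` function `φ` with `sup |∇φ| ≤ L`, one has
`‖φ u(t)‖₂ ≤ ‖φ u(0)‖₂ + 2 t L ‖∇u(0)‖₂` for all `t ≥ 0`. -/
theorem localized_mass_growth_linear
    {d : ℕ} (hd : 1 ≤ d) (u : ℝ → SchwartzMap (Ed d) ℂ)
    (hu : IsLinSchrodSol d u)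
    (φ : Ed d → ℝ) (L : ℝ) (hφ : ContDiff ℝ 1 φ)
    (hφbdd : ∃ C, ∀ x, |φ x| ≤ C)
    (hφgrad : ∀ x, ‖fderiv ℝ φ x‖ ≤ L)
    (t : ℝ) (ht : 0 ≤ t) :
    L2 (fun x => (φ x : ℂ) * u t x) ≤
      L2 (fun x => (φ x : ℂ) * u 0 x) + 2 * t * L * gradL2 (fun x => u 0 x) := by
  obtain ⟨C, hC⟩ := hφbdd
  have hG : ∀ s, 0 ≤ s → LMG.GG (u s) = LMG.GG (u 0) := fun s hs =>
    LMG.baire_const (fun s => LMG.GG (u s)) (LMG.GG_closed hu)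
      (fun a b B hab hB => LMG.GG_const hu hab hB) 0 s hs
  have h := LMG.growth hu hφ hC hφgrad ht (B := √(LMG.GG (u 0)))
    (fun s hs => by rw [hG s hs.1.le])
  have e : ∀ s, L2 (fun x => (φ x : ℂ) * u s x) = √(LMG.hh u φ s) := by
    intro s
    rw [L2, ← Real.sqrt_eq_rpow, LMG.hh]
    congr 2
    funext x
    rw [norm_mul, mul_pow, Complex.norm_real, Real.norm_eq_abs, sq_abs]
  have e' : gradL2 (fun x => u 0 x) = √(LMG.GG (u 0)) := by
    rw [gradL2, ← Real.sqrt_eq_rpow]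
    rfl
  rw [e, e, e']
  have := (abs_le.1 h).2
  linarith
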